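/- Let ℓ ≥ 4 be an integer, G a finite connected graph not containing the ℓ-wheel W_ℓ as an induced minor, and w a normal weighting of G. Let C be an induced cycle in G of length at least 4 such that J := V(G) \ V(C) is an independent set. If w(v) ≤ 1/2 for all v ∈ J, then there exists a w-balanced separator S ⊆ V(C) of G with |S| ≤ (ℓ-1)². -/

import Mathlib

open SimpleGraph

variable {V : Type}

/-- `u` and `v` are connected by a walk in `G` avoiding `S`
(i.e., they lie in the same component of `G - S`). -/
def ReachOutside (G : SimpleGraph V) (S : Set V) (u v : V) : Prop :=
  ∃ p : G.Walk u v, ∀ x ∈ p.support, x ∉ S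

/-- Total weight of a vertex set. -/
noncomputable def setWeight [Finite V] (w : V → ℝ) (A : Set V) : ℝ :=
  ∑ v ∈ (Set.toFinite A).toFinset, w v

/-- `S` is a `w`-balanced separator of `G`: every component of `G - S`
has weight at most half the total weight. -/
def IsBalancedSep [Finite V] (G : SimpleGraph V) (w : V → ℝ) (S : Set V) : Prop :=
  ∀ v, v ∉ S → setWeight w {u | ReachOutside G S u v} ≤ setWeight w (Set.univ : Set V) / 2

/-- Closed neighbourhood `N[A]` of a vertex set. -/
def closedNbhd (G : SimpleGraph V) (A : Set V) : Set V :=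
  A ∪ {x | ∃ a ∈ A, G.Adj a x}

/-- `S` separates `A` from `B` in `G`: every walk from `A` to `B` meets `S`. -/
def Separates (G : SimpleGraph V) (S A B : Set V) : Prop :=
  ∀ a ∈ A, ∀ b ∈ B, ∀ p : G.Walk a b, ∃ x ∈ p.support, x ∈ S

/-- `C` is (the vertex set of) an induced cycle of `G`: the induced subgraph is
connected and every vertex of `C` has exactly two neighbours in `C`. -/
def IsInducedCycle (G : SimpleGraph V) (C : Set V) : Prop :=
  (G.induce C).Connected ∧ ∀ x ∈ C, (G.neighborSet x ∩ C).ncard = 2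

/-- `H` is an induced minor of `G`. -/
def IsInducedMinor {W : Type} (H : SimpleGraph W) (G : SimpleGraph V) : Prop :=
  ∃ X : W → Set V,
    (∀ a, (G.induce (X a)).Connected) ∧
    (Pairwise fun a b => Disjoint (X a) (X b)) ∧
    ∀ a b, a ≠ b → ((∃ u ∈ X a, ∃ v ∈ X b, G.Adj u v) ↔ H.Adj a b)

/-- `H` is a minor of `G`. -/
def IsMinor {W : Type} (H : SimpleGraph W) (G : SimpleGraph V) : Prop :=
  ∃ X : W → Set V,
    (∀ a, (G.induce (X a)).Connected) ∧
    (Pairwise fun a b => Disjoint (X a) (X b)) ∧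
    ∀ a b, H.Adj a b → ∃ u ∈ X a, ∃ v ∈ X b, G.Adj u v

/-- The `ℓ`-wheel: a cycle of length `ℓ` plus a universal vertex (`none`). -/
def wheel (ℓ : ℕ) : SimpleGraph (Option (ZMod ℓ)) :=
  SimpleGraph.fromRel fun a b =>
    a = none ∨ b = none ∨ ∃ i : ZMod ℓ, a = some i ∧ b = some (i + 1)

/-- The `ℓ`-fan: a path on `ℓ` vertices plus a universal vertex (`none`). -/
def fan (ℓ : ℕ) : SimpleGraph (Option (Fin ℓ)) :=
  SimpleGraph.fromRel fun a b =>
    a = none ∨ b = none ∨ ∃ i j : Fin ℓ, a = some i ∧ b = some j ∧ (j : ℕ) = (i : ℕ) + 1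

/-- A cyclic parametrization of the induced cycle `C`. -/
structure Cyc (G : SimpleGraph V) (C : Set V) (n : ℕ) (P : ℕ → V) : Prop where
  n4 : 4 ≤ n
  mem : ∀ a, P a ∈ C
  surj : ∀ y ∈ C, ∃ a, a < n ∧ y = P a
  per : ∀ a, P (a + n) = P a
  inj : ∀ a b, a < n → b < n → P a = P b → a = b
  adj : ∀ a b, a < b → b < n → (G.Adj (P a) (P b) ↔ b = a + 1 ∨ (a = 0 ∧ b = n - 1))

lemma exists_cyc [Finite V] (G : SimpleGraph V) (C : Set V) (hC : IsInducedCycle G C)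
    (hC4 : 4 ≤ C.ncard) : ∃ n P, Cyc G C n P := by
  classical
  obtain ⟨hconn, h2⟩ := hC
  have hnb : ∀ x : C, ((G.induce C).neighborSet x).ncard = 2 := by
    intro x
    rw [← h2 x x.2, ← Set.ncard_image_of_injective _ Subtype.val_injective]
    congr 1
    ext y
    simp only [Set.mem_image, mem_neighborSet, comap_adj, Function.Embedding.subtype_apply,
      Subtype.exists, exists_and_right, exists_eq_right, Set.mem_inter_iff]
    constructor
    · rintro ⟨h, h'⟩; exact ⟨h', h⟩
    · rintro ⟨h, h'⟩; exact ⟨h', h⟩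
  have hcyc : (G.induce C).IsCycles := fun v _ => hnb v
  obtain ⟨v0⟩ := hconn.nonempty
  have hne : ((G.induce C).neighborSet v0).Nonempty := by
    apply Set.nonempty_of_ncard_ne_zero
    rw [hnb]; norm_num
  obtain ⟨p, hp, hpv⟩ := hcyc.exists_cycle_toSubgraph_verts_eq_connectedComponentSupp
    (v := v0) (c := (G.induce C).connectedComponentMk v0) rfl hne
  have hall : ∀ y : C, ∃ a, a < p.length ∧ y = p.getVert a := by
    intro y
    have : y ∈ p.toSubgraph.verts := by
      rw [hpv]
      exact ConnectedComponent.sound (hconn.preconnected y v0)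
    rw [Walk.mem_verts_toSubgraph, Walk.mem_support_iff_exists_getVert] at this
    obtain ⟨a, ha, hal⟩ := this
    have h3 := hp.three_le_length
    rcases Nat.lt_or_ge a p.length with h | h
    · exact ⟨a, h, ha.symm⟩
    · refine ⟨0, by omega, ?_⟩
      have : a = p.length := by omega
      subst this
      rw [← ha]; simp
  have hinj : ∀ a b, a < p.length → b < p.length → p.getVert a = p.getVert b → a = b := by
    intro a b ha hb h
    exact hp.getVert_injOn' (by simp only [Set.mem_ofPred_eq]; omega)
      (by simp only [Set.mem_ofPred_eq]; omega) h
  have hlen : 4 ≤ p.length := by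
    refine hC4.trans ?_
    have : C ⊆ Set.image (fun a => (p.getVert a : V)) (Finset.range p.length : Set ℕ) := by
      intro y hy
      obtain ⟨a, ha, h⟩ := hall ⟨y, hy⟩
      exact ⟨a, by simpa using ha, by simp only [← h]⟩
    refine (Set.ncard_le_ncard this (Set.toFinite _)).trans ?_
    refine (Set.ncard_image_le (Set.toFinite _)).trans ?_
    rw [Set.ncard_coe_finset]; simp
  have hsucc : ∀ a, a < p.length → (G.induce C).Adj (p.getVert a) (p.getVert (a + 1)) :=
    fun a ha => p.adj_getVert_succ ha
  have hlast : p.getVert p.length = p.getVert 0 := by simp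
  refine ⟨p.length, fun a => (p.getVert (a % p.length) : V), hlen, fun a => Subtype.coe_prop _,
    ?_, ?_, ?_, ?_⟩
  · intro y hy
    obtain ⟨a, ha, h⟩ := hall ⟨y, hy⟩
    exact ⟨a, ha, by simp only [Nat.mod_eq_of_lt ha]; rw [← h]⟩
  · intro a; simp
  · intro a b ha hb h
    simp only [Nat.mod_eq_of_lt ha, Nat.mod_eq_of_lt hb] at h
    exact hinj a b ha hb (Subtype.ext h)
  · intro a b hab hb
    have ha : a < p.length := by omega
    simp only [Nat.mod_eq_of_lt ha, Nat.mod_eq_of_lt hb]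
    change (G.induce C).Adj (p.getVert a) (p.getVert b) ↔ _
    constructor
    · intro h
      -- the neighbours of b
      obtain ⟨c, hc, hcb⟩ : ∃ c, c < p.length ∧ (c = b + 1 ∨ (c = 0 ∧ b = p.length - 1)) := by
        by_cases h : b + 1 < p.length
        · exact ⟨b + 1, h, Or.inl rfl⟩
        · exact ⟨0, by omega, Or.inr ⟨rfl, by omega⟩⟩
      have hadjc : (G.induce C).Adj (p.getVert b) (p.getVert c) := by
        have := hsucc b hb
        rcases hcb with rfl | ⟨rfl, h⟩
        · exact this
        · have e : b + 1 = p.length := by omega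
          rw [e, hlast] at this; exact this
      have hadjd : (G.induce C).Adj (p.getVert b) (p.getVert (b - 1)) := by
        have := hsucc (b - 1) (by omega)
        have e : b - 1 + 1 = b := by omega
        rw [e] at this; exact this.symm
      have hne : p.getVert c ≠ p.getVert (b - 1) := by
        intro h
        have := hinj _ _ hc (by omega) h
        omega
      have heq : ({p.getVert c, p.getVert (b - 1)} : Set C) =
          (G.induce C).neighborSet (p.getVert b) := by
        apply Set.eq_of_subset_of_ncard_le
        · rintro x (rfl | rfl)
          · exact hadjc
          · exact hadjd
        · rw [hnb, Set.ncard_pair hne]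
        · exact Set.toFinite _
      have : p.getVert a ∈ ({p.getVert c, p.getVert (b - 1)} : Set C) := by
        rw [heq]; exact h.symm
      rcases this with h | h
      · have := hinj _ _ ha hc h; omega
      · have := hinj _ _ ha (by omega) h; omega
    · rintro (rfl | ⟨rfl, rfl⟩)
      · exact hsucc a ha
      · have := hsucc (p.length - 1) (by omega)
        have e : p.length - 1 + 1 = p.length := by omega
        rw [e, hlast] at this; exact this.symm

lemma Cyc.shift1 {G : SimpleGraph V} {C : Set V} {n : ℕ} {P : ℕ → V} (h : Cyc G C n P) :
    Cyc G C n (fun a => P (1 + a)) := by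
  have h4 := h.n4
  have h0 : P n = P 0 := by simpa using h.per 0
  refine ⟨h.n4, fun a => h.mem _, ?_, ?_, ?_, ?_⟩
  · intro y hy
    obtain ⟨a, ha, rfl⟩ := h.surj y hy
    rcases Nat.eq_zero_or_pos a with rfl | h'
    · refine ⟨n - 1, by omega, ?_⟩
      have e : 1 + (n - 1) = n := by omega
      simp only [e, h0]
    · refine ⟨a - 1, by omega, ?_⟩
      have e : 1 + (a - 1) = a := by omega
      simp only [e]
  · intro a
    have := h.per (1 + a)
    simpa [add_assoc] using this
  · intro a b ha hb hab
    by_cases h1 : 1 + a < n <;> by_cases h2 : 1 + b < n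
    · have := h.inj _ _ h1 h2 hab; omega
    · have e : 1 + b = n := by omega
      rw [e, h0] at hab
      have := h.inj _ _ h1 (by omega) hab; omega
    · have e : 1 + a = n := by omega
      rw [e, h0] at hab
      have := h.inj _ _ (by omega) h2 hab; omega
    · omega
  · intro a b hab hb
    by_cases h2 : 1 + b < n
    · rw [h.adj (1 + a) (1 + b) (by omega) h2]; omega
    · have e : 1 + b = n := by omega
      rw [e, h0, G.adj_comm, h.adj 0 (1 + a) (by omega) (by omega)]; omega

lemma Cyc.shift {G : SimpleGraph V} {C : Set V} {n : ℕ} {P : ℕ → V} (h : Cyc G C n P) (i : ℕ) :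
    Cyc G C n (fun a => P (i + a)) := by
  induction i with
  | zero => simpa using h
  | succ i ih =>
    have := ih.shift1
    simpa [add_assoc] using this

lemma Cyc.succ_adj {G : SimpleGraph V} {C : Set V} {n : ℕ} {P : ℕ → V} (h : Cyc G C n P) (a : ℕ) :
    G.Adj (P a) (P (a + 1)) := by
  have := ((h.shift a).adj 0 1 (by omega) (by have := h.n4; omega)).2 (by simp)
  simpa using this

lemma reach_path (G : SimpleGraph V) (f : ℕ → V) (S : Set V) (a d : ℕ)
    (hS : ∀ t, t ≤ d → f (a + t) ∈ S)
    (hadj : ∀ t, t < d → G.Adj (f (a + t)) (f (a + t + 1))) :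
    (G.induce S).Reachable ⟨f a, hS 0 (by omega)⟩ ⟨f (a + d), hS d le_rfl⟩ := by
  induction d with
  | zero => exact Reachable.refl _
  | succ d ih =>
    refine (ih (fun t ht => hS t (by omega)) (fun t ht => hadj t (by omega))).trans ?_
    apply Adj.reachable
    exact hadj d (by omega)

lemma exists_cuts (ℓ : ℕ) (hℓ : 1 ≤ ℓ) : ∀ (m : ℕ) (T : Finset ℕ), (∀ t ∈ T, t < m) → ℓ ≤ T.card →
    ∃ b : ℕ → ℕ, b 0 = 0 ∧ b ℓ = m ∧ ∀ j, j < ℓ → ∃ t ∈ T, b j ≤ t ∧ t < b (j + 1) := by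
  induction ℓ, hℓ using Nat.le_induction with
  | base =>
    intro m T hT hc
    obtain ⟨t, ht⟩ := Finset.card_pos.1 hc
    refine ⟨fun j => if j = 0 then 0 else m, by simp, by simp, ?_⟩
    intro j hj
    have : j = 0 := by omega
    subst this
    exact ⟨t, ht, by simp, by simpa using hT t ht⟩
  | succ ℓ hℓ ih =>
    intro m T hT hc
    have hne : T.Nonempty := Finset.card_pos.1 (by omega)
    set M := T.max' hne
    have hM : M ∈ T := T.max'_mem hne
    obtain ⟨b, h0, hl, hb⟩ := ih M (T.erase M) (by
      intro t ht
      rw [Finset.mem_erase] at ht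
      exact lt_of_le_of_ne (T.le_max' t ht.2) ht.1) (by
      rw [Finset.card_erase_of_mem hM]; omega)
    refine ⟨fun j => if j = ℓ + 1 then m else b j, by simpa using h0, by simp, ?_⟩
    intro j hj
    by_cases h : j = ℓ
    · subst h
      refine ⟨M, hM, ?_, ?_⟩
      · simp [hl]
      · simpa using hT M hM
    · obtain ⟨t, ht, h1, h2⟩ := hb j (by omega)
      refine ⟨t, Finset.mem_of_mem_erase ht, ?_, ?_⟩
      · simp only [show j ≠ ℓ + 1 by omega, if_false]; exact h1
      · simp only [show j + 1 ≠ ℓ + 1 by omega, if_false]; exact h2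

/-- Key wheel construction. -/
lemma wheel_of_rim (G : SimpleGraph V) (ℓ : ℕ) (hℓ : 4 ≤ ℓ) (m : ℕ) (q : ℕ → V)
    (hinj : ∀ a b, a < m → b < m → q a = q b → a = b)
    (hadj : ∀ a b, a < b → b < m → (G.Adj (q a) (q b) ↔ b = a + 1 ∨ (a = 0 ∧ b = m - 1)))
    (X : Set V) (hX : (G.induce X).Connected) (hqX : ∀ a, a < m → q a ∉ X)
    (T : Finset ℕ) (hT : ∀ t ∈ T, t < m ∧ ∃ x ∈ X, G.Adj x (q t)) (hc : ℓ ≤ T.card) :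
    IsInducedMinor (wheel ℓ) G := by
  obtain ⟨b, hb0, hbl, hb⟩ := exists_cuts ℓ (by omega) m T (fun t ht => (hT t ht).1) hc
  have hstep : ∀ j, j < ℓ → b j < b (j + 1) := by
    intro j hj
    obtain ⟨t, _, h1, h2⟩ := hb j hj
    omega
  have hmono : ∀ d i, i + d ≤ ℓ → b i ≤ b (i + d) := by
    intro d
    induction d with
    | zero => intro i _; simp
    | succ d ih =>
      intro i hi
      have h1 := ih i (by omega)
      have h2 := hstep (i + d) (by omega)
      rw [← add_assoc]; omega
  have hmono' : ∀ i j, i ≤ j → j ≤ ℓ → b i ≤ b j := by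
    intro i j hij hj
    have := hmono (j - i) i (by omega)
    rwa [show i + (j - i) = j by omega] at this
  have hlm : ∀ j, j ≤ ℓ → b j ≤ m := fun j hj => hbl ▸ hmono' j ℓ hj le_rfl
  have : NeZero ℓ := ⟨by omega⟩
  set Y : ℕ → Set V := fun j => {y | ∃ a, b j ≤ a ∧ a < b (j + 1) ∧ q a = y} with hY
  -- adjacency between the pieces
  have hYadj : ∀ i j, i < j → j < ℓ →
      ((∃ u ∈ Y i, ∃ v ∈ Y j, G.Adj u v) ↔ (j = i + 1 ∨ (i = 0 ∧ j = ℓ - 1))) := by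
    intro i j hij hj
    constructor
    · rintro ⟨_, ⟨a, ha1, ha2, rfl⟩, _, ⟨c, hc1, hc2, rfl⟩, h⟩
      have h1 := hmono' (i + 1) j (by omega) (by omega)
      have h2 := hlm (j + 1) (by omega)
      rw [hadj a c (by omega) (by omega)] at h
      rcases h with h | ⟨h, h'⟩
      · left
        by_contra hne
        have h3 := hmono' (i + 2) j (by omega) (by omega)
        have h4 := hstep (i + 1) (by omega)
        simp only [add_assoc] at h4
        norm_num at h4
        omega
      · right
        constructor
        · by_contra hne
          have h3 := hmono' 1 i (by omega) (by omega)
          have h4 := hstep 0 (by omega)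
          simp only [zero_add] at h4
          omega
        · by_contra hne
          have h3 := hmono' (j + 2) ℓ (by omega) (by omega)
          have h4 := hstep (j + 1) (by omega)
          simp only [add_assoc] at h4
          norm_num at h4
          omega
    · rintro (rfl | ⟨rfl, rfl⟩)
      · have h1 := hstep i (by omega)
        have h2 := hstep (i + 1) (by omega)
        have h3 := hlm (i + 1 + 1) (by omega)
        refine ⟨_, ⟨b (i + 1) - 1, by omega, by omega, rfl⟩, _, ⟨b (i + 1), le_rfl, h2, rfl⟩, ?_⟩
        rw [hadj _ _ (by omega) (by omega)]
        omega
      · have h1 := hstep 0 (by omega)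
        have h2 := hstep (ℓ - 1) (by omega)
        have e : ℓ - 1 + 1 = ℓ := by omega
        have h4 := hmono' 1 (ℓ - 1) (by omega) (by omega)
        rw [e, hbl] at h2
        simp only [zero_add] at h1
        refine ⟨_, ⟨0, by omega, by simpa [hb0] using h1, rfl⟩, _,
          ⟨m - 1, by omega, by rw [e, hbl]; omega, rfl⟩, ?_⟩
        rw [hadj _ _ (by omega) (by omega)]
        omega
  have hXY : ∀ j, j < ℓ → ∃ u ∈ X, ∃ v ∈ Y j, G.Adj u v := by
    intro j hj
    obtain ⟨t, ht, h1, h2⟩ := hb j hj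
    obtain ⟨_, x, hx, hxt⟩ := hT t ht
    exact ⟨x, hx, q t, ⟨t, h1, h2, rfl⟩, hxt⟩
  have hYdisj : ∀ i j, i < j → j < ℓ → Disjoint (Y i) (Y j) := by
    intro i j hij hj
    rw [Set.disjoint_left]
    rintro _ ⟨a, ha1, ha2, rfl⟩ ⟨c, hc1, hc2, h⟩
    have h1 := hmono' (i + 1) j (by omega) (by omega)
    have h2 := hlm (j + 1) (by omega)
    have := hinj c a (by omega) (by omega) h
    omega
  have hXYd : ∀ j, j < ℓ → Disjoint X (Y j) := by
    intro j hj
    rw [Set.disjoint_left]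
    rintro _ hx ⟨a, ha1, ha2, rfl⟩
    have h2 := hlm (j + 1) (by omega)
    exact hqX a (by omega) hx
  have hYconn : ∀ j, j < ℓ → (G.induce (Y j)).Connected := by
    intro j hj
    have h2 := hlm (j + 1) (by omega)
    rw [connected_iff_exists_forall_reachable]
    refine ⟨⟨q (b j), ⟨b j, le_rfl, hstep j hj, rfl⟩⟩, ?_⟩
    rintro ⟨_, ⟨a, ha1, ha2, rfl⟩⟩
    have := reach_path G q (Y j) (b j) (a - b j)
      (fun t ht => ⟨b j + t, by omega, by omega, rfl⟩)
      (fun t ht => by rw [hadj _ _ (by omega) (by omega)]; omega)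
    have e : b j + (a - b j) = a := by omega
    simp only [e] at this
    exact this
  have hval : ∀ i j : ZMod ℓ, j = i + 1 ↔ (j.val = i.val + 1 ∨ (i.val = ℓ - 1 ∧ j.val = 0)) := by
    intro i j
    have hi := ZMod.val_lt i
    have hj := ZMod.val_lt j
    have : Fact (1 < ℓ) := ⟨by omega⟩
    rw [← (ZMod.val_injective ℓ).eq_iff, ZMod.val_add, ZMod.val_one]
    by_cases h : i.val + 1 < ℓ
    · rw [Nat.mod_eq_of_lt h]; omega
    · have e : i.val + 1 = ℓ := by omega
      rw [e, Nat.mod_self]; omega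
  refine ⟨fun o => o.elim X (fun i => Y i.val), ?_, ?_, ?_⟩
  · rintro (_ | i)
    · exact hX
    · exact hYconn _ (ZMod.val_lt i)
  · rintro (_ | i) (_ | j) hij
    · exact absurd rfl hij
    · exact hXYd _ (ZMod.val_lt j)
    · exact (hXYd _ (ZMod.val_lt i)).symm
    · have hne : i.val ≠ j.val := fun h => hij (by rw [ZMod.val_injective ℓ h])
      rcases lt_or_gt_of_ne hne with h | h
      · exact hYdisj _ _ h (ZMod.val_lt j)
      · exact (hYdisj _ _ h (ZMod.val_lt i)).symm
  · rintro (_ | i) (_ | j) hij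
    · exact absurd rfl hij
    · simp only [Option.elim]
      refine iff_of_true (hXY _ (ZMod.val_lt j)) ?_
      simp [wheel]
    · simp only [Option.elim]
      refine iff_of_true ?_ ?_
      · obtain ⟨u, hu, v, hv, h⟩ := hXY _ (ZMod.val_lt i)
        exact ⟨v, hv, u, hu, h.symm⟩
      · simp [wheel]
    · have hne : i.val ≠ j.val := fun h => hij (by rw [ZMod.val_injective ℓ h])
      have hi := ZMod.val_lt i
      have hj := ZMod.val_lt j
      have hw : (wheel ℓ).Adj (some i) (some j) ↔ (j = i + 1 ∨ i = j + 1) := by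
        simp only [wheel, fromRel_adj, ne_eq, hij, not_false_eq_true, reduceCtorEq, false_or,
          Option.some.injEq, true_and]
        constructor
        · rintro (⟨k, rfl, rfl⟩ | ⟨k, rfl, rfl⟩) <;> simp
        · rintro (rfl | rfl)
          · exact Or.inl ⟨i, rfl, rfl⟩
          · exact Or.inr ⟨j, rfl, rfl⟩
      rw [hw, hval, hval]
      simp only [Option.elim]
      rcases lt_or_gt_of_ne hne with h | h
      · rw [hYadj _ _ h hj]; omega
      · have : (∃ u ∈ Y i.val, ∃ v ∈ Y j.val, G.Adj u v) ↔
            (∃ u ∈ Y j.val, ∃ v ∈ Y i.val, G.Adj u v) := by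
          constructor
          · rintro ⟨u, hu, v, hv, h⟩; exact ⟨v, hv, u, hu, h.symm⟩
          · rintro ⟨u, hu, v, hv, h⟩; exact ⟨v, hv, u, hu, h.symm⟩
        rw [this, hYadj _ _ h hi]; omega

lemma Cyc.per_mod {G : SimpleGraph V} {C : Set V} {n : ℕ} {P : ℕ → V} (h : Cyc G C n P)
    (x t : ℕ) : P (x % n + t) = P (x + t) := by
  have key : ∀ m y, P (y + n * m) = P y := by
    intro m
    induction m with
    | zero => intro y; simp
    | succ m ih => intro y; rw [Nat.mul_succ, ← add_assoc, h.per, ih]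
  have := key (x / n) (x % n + t)
  rw [← this]
  congr 1
  have := Nat.mod_add_div x n
  omega

/-- The separator attached to the arc `P 0, …, P k`. -/
def sepT (G : SimpleGraph V) (C : Set V) (n : ℕ) (P : ℕ → V) (k : ℕ) : Set V :=
  {y | y = P 0 ∨ y = P k ∨ ∃ a, 0 < a ∧ a < k ∧ y = P a ∧
    ∃ u, u ∉ C ∧ G.Adj u y ∧ ∃ b, k < b ∧ b < n ∧ G.Adj u (P b)}

/-- Admissible arcs: the whole cycle, or an arc between consecutive neighbours of a vertex. -/
def Adm (G : SimpleGraph V) (C : Set V) (n : ℕ) (P : ℕ → V) (k : ℕ) : Prop :=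
  k = n ∨ (0 < k ∧ k < n ∧ ∃ v, v ∉ C ∧ G.Adj v (P 0) ∧ G.Adj v (P k) ∧
    ∀ a, 0 < a → a < k → ¬ G.Adj v (P a))

/-- The arc contains a heavy component. -/
def Heavy [Finite V] (G : SimpleGraph V) (C : Set V) (n : ℕ) (w : V → ℝ) (P : ℕ → V) (k : ℕ) :
    Prop :=
  ∃ a, 0 < a ∧ a < k ∧ 1 / 2 < setWeight w {z | ReachOutside G (sepT G C n P k) z (P a)}

/-- `z` lies inside the arc. -/
def Ins (G : SimpleGraph V) (C : Set V) (n : ℕ) (P : ℕ → V) (k : ℕ) (S : Set V) (z : V) : Prop :=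
  (∃ a, 0 < a ∧ a < k ∧ z = P a ∧ z ∉ S) ∨
  (z ∉ C ∧ (∀ b, k < b → b < n → ¬ G.Adj z (P b)) ∧
    ∃ a, 0 < a ∧ a < k ∧ G.Adj z (P a) ∧ P a ∉ S)

lemma sepT_subset {G : SimpleGraph V} {C : Set V} {n : ℕ} {P : ℕ → V} (h : Cyc G C n P) (k : ℕ) :
    sepT G C n P k ⊆ C := by
  rintro y (rfl | rfl | ⟨a, _, _, rfl, _⟩) <;> exact h.mem _

lemma deg_le [Finite V] {G : SimpleGraph V} {C : Set V} {n : ℕ} {P : ℕ → V} (h : Cyc G C n P)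
    (ℓ : ℕ) (hℓ : 4 ≤ ℓ) (hfree : ¬ IsInducedMinor (wheel ℓ) G) (v : V) (hv : v ∉ C)
    (F : Finset ℕ) (hF : ∀ t ∈ F, t < n ∧ G.Adj v (P t)) : F.card ≤ ℓ - 1 := by
  by_contra hc
  apply hfree
  refine wheel_of_rim G ℓ hℓ n P h.inj h.adj {v} ?_ ?_ F ?_ (by omega)
  · rw [connected_iff_exists_forall_reachable]
    refine ⟨⟨v, rfl⟩, ?_⟩
    rintro ⟨_, rfl⟩
    exact Reachable.refl _
  · intro a _ ha
    have ha : P a = v := ha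
    exact hv (ha ▸ h.mem a)
  · intro t ht
    exact ⟨(hF t ht).1, v, rfl, (hF t ht).2⟩

lemma sepT_card [Finite V] {G : SimpleGraph V} {C : Set V} {n : ℕ} {P : ℕ → V} (h : Cyc G C n P)
    (ℓ : ℕ) (hℓ : 4 ≤ ℓ) (hfree : ¬ IsInducedMinor (wheel ℓ) G) (k : ℕ) (hk : Adm G C n P k) :
    (sepT G C n P k).ncard ≤ ℓ - 1 := by
  classical
  have h4 := h.n4
  by_cases hkn : n - 1 ≤ k
  · have : sepT G C n P k ⊆ {P 0, P k} := by
      rintro y (rfl | rfl | ⟨a, _, _, rfl, u, _, _, b, hb, hb', _⟩)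
      · simp
      · simp
      · omega
    have h1 := Set.ncard_le_ncard this (Set.toFinite _)
    have h2 := Set.ncard_insert_le (P 0) {P k}
    rw [Set.ncard_singleton] at h2
    omega
  obtain hk | ⟨hk0, hkn', v, hvC, hv0, hvk, hvb⟩ := hk
  · omega
  by_contra hcard
  set F : Finset ℕ := (Finset.range (k + 1)).filter (fun t => P t ∈ sepT G C n P k) with hF
  have hFc : ℓ ≤ F.card := by
    have hsub : sepT G C n P k ⊆ Set.image P (F : Set ℕ) := by
      intro y hy
      have : ∃ a, a ≤ k ∧ y = P a := by
        rcases hy with rfl | rfl | ⟨a, _, ha, rfl, _⟩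
        · exact ⟨0, by omega, rfl⟩
        · exact ⟨k, le_rfl, rfl⟩
        · exact ⟨a, by omega, rfl⟩
      obtain ⟨a, ha, rfl⟩ := this
      refine ⟨a, ?_, rfl⟩
      simp only [hF, Finset.coe_filter, Finset.mem_range, Set.mem_ofPred_eq]
      exact ⟨by omega, hy⟩
    have h1 := Set.ncard_le_ncard hsub (Set.toFinite _)
    have h2 := Set.ncard_image_le (f := P) (Set.toFinite (F : Set ℕ))
    rw [Set.ncard_coe_finset] at h2
    omega
  apply hfree
  set X : Set V := {x | (∃ b, k < b ∧ b < n ∧ x = P b) ∨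
    (x ∉ C ∧ x ≠ v ∧ ∃ b, k < b ∧ b < n ∧ G.Adj x (P b))} with hX
  have hPX : ∀ b, k < b → b < n → P b ∈ X := fun b h1 h2 => Or.inl ⟨b, h1, h2, rfl⟩
  have hvP : ∀ a, P a ≠ v := fun a e => hvC (e ▸ h.mem a)
  have hPb : ∀ b (h1 : k < b) (h2 : b < n), (G.induce X).Reachable
      ⟨P (k + 1), hPX (k + 1) (by omega) (by omega)⟩ ⟨P b, hPX b h1 h2⟩ := by
    intro b h1 h2
    have := reach_path G P X (k + 1) (b - (k + 1)) (fun t ht => hPX _ (by omega) (by omega))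
      (fun t ht => h.succ_adj _)
    have e : k + 1 + (b - (k + 1)) = b := by omega
    simp only [e] at this
    exact this
  refine wheel_of_rim G ℓ hℓ (k + 2) (fun a => if a ≤ k then P a else v) ?_ ?_ X ?_ ?_ F ?_ hFc
  · intro a b ha hb hab
    split_ifs at hab with h1 h2 h2
    · exact h.inj _ _ (by omega) (by omega) hab
    · exact absurd hab (hvP _)
    · exact absurd hab.symm (hvP _)
    · omega
  · intro a b hab hb
    simp only [show a ≤ k by omega, if_true]
    split_ifs with h1
    · rw [h.adj a b hab (by omega)]; omega
    · have e : b = k + 1 := by omega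
      subst e
      rw [G.adj_comm]
      constructor
      · intro hadj
        by_contra hne
        exact hvb a (by omega) (by omega) hadj
      · rintro (hh | ⟨hh, _⟩)
        · have : a = k := by omega
          rw [this]; exact hvk
        · rw [hh]; exact hv0
  · rw [connected_iff_exists_forall_reachable]
    refine ⟨⟨P (k + 1), hPX _ (by omega) (by omega)⟩, ?_⟩
    rintro ⟨x, hx⟩
    rcases hx with ⟨b, h1, h2, rfl⟩ | ⟨hx1, hx2, b, h1, h2, hadj⟩
    · exact hPb b h1 h2
    · refine (hPb b h1 h2).trans (Adj.reachable ?_)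
      exact hadj.symm
  · intro a ha hmem
    split_ifs at hmem with h1
    · rcases hmem with ⟨b, hb1, hb2, e⟩ | ⟨hx1, _⟩
      · have := h.inj _ _ (by omega) hb2 e; omega
      · exact hx1 (h.mem a)
    · rcases hmem with ⟨b, hb1, hb2, e⟩ | ⟨_, hx2, _⟩
      · exact hvP b e.symm
      · exact hx2 rfl
  · intro t ht
    simp only [hF, Finset.mem_filter, Finset.mem_range] at ht
    obtain ⟨ht1, ht2⟩ := ht
    refine ⟨by omega, ?_⟩
    simp only [show t ≤ k by omega, if_true]
    rcases ht2 with e | e | ⟨a, ha1, ha2, e, u, huC, hu, b, hb1, hb2, hub⟩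
    · refine ⟨P (n - 1), hPX _ (by omega) (by omega), ?_⟩
      rw [e, G.adj_comm, h.adj _ _ (by omega) (by omega)]
      omega
    · refine ⟨P (k + 1), hPX _ (by omega) (by omega), ?_⟩
      rw [e]; exact (h.succ_adj k).symm
    · refine ⟨u, Or.inr ⟨huC, ?_, b, hb1, hb2, hub⟩, hu⟩
      rintro rfl
      rw [e] at hu
      exact hvb a ha1 ha2 hu

lemma ReachOutside.inv {G : SimpleGraph V} {S : Set V} (Q : V → Prop)
    (hstep : ∀ x y, Q x → G.Adj x y → y ∉ S → Q y) {u v : V} (h : ReachOutside G S u v)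
    (hv : Q v) : Q u := by
  obtain ⟨p, hp⟩ := h
  induction p with
  | nil => exact hv
  | cons hadj p ih =>
    refine hstep _ _ (ih hv ?_) hadj.symm (hp _ (by simp))
    intro x hx
    exact hp x (by simp [hx])

lemma ReachOutside.symm {G : SimpleGraph V} {S : Set V} {u v : V} (h : ReachOutside G S u v) :
    ReachOutside G S v u := by
  obtain ⟨p, hp⟩ := h
  exact ⟨p.reverse, fun x hx => hp x (by simpa using hx)⟩

lemma ReachOutside.trans {G : SimpleGraph V} {S : Set V} {u v x : V} (h : ReachOutside G S u v)
    (h' : ReachOutside G S v x) : ReachOutside G S u x := by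
  obtain ⟨p, hp⟩ := h
  obtain ⟨q, hq⟩ := h'
  refine ⟨p.append q, fun y hy => ?_⟩
  rw [Walk.mem_support_append_iff] at hy
  exact hy.elim (hp y) (hq y)

lemma ReachOutside.mono {G : SimpleGraph V} {S S' : Set V} (hS : S ⊆ S') {u v : V}
    (h : ReachOutside G S' u v) : ReachOutside G S u v := by
  obtain ⟨p, hp⟩ := h
  exact ⟨p, fun x hx hx' => hp x hx (hS hx')⟩

lemma ReachOutside.left {G : SimpleGraph V} {S : Set V} {u v : V} (h : ReachOutside G S u v) :
    u ∉ S := by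
  obtain ⟨p, hp⟩ := h
  exact hp u (by simp)

lemma ReachOutside.refl {G : SimpleGraph V} {S : Set V} {u : V} (h : u ∉ S) :
    ReachOutside G S u u := ⟨Walk.nil, by simpa using h⟩

lemma ReachOutside.of_adj {G : SimpleGraph V} {S : Set V} {u v : V} (hu : u ∉ S) (hv : v ∉ S)
    (h : G.Adj u v) : ReachOutside G S u v := by
  refine ⟨Walk.cons h Walk.nil, ?_⟩
  intro x hx
  simp only [Walk.support_cons, Walk.support_nil, List.mem_cons, List.not_mem_nil, or_false] at hx
  rcases hx with rfl | rfl <;> assumption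

lemma setWeight_mono [Finite V] {w : V → ℝ} (hw0 : ∀ v, 0 ≤ w v) {A B : Set V} (h : A ⊆ B) :
    setWeight w A ≤ setWeight w B := by
  unfold setWeight
  apply Finset.sum_le_sum_of_subset_of_nonneg
  · simpa using h
  · intro i _ _; exact hw0 i

lemma setWeight_disj [Finite V] {w : V → ℝ} (hw0 : ∀ v, 0 ≤ w v)
    (hw1 : setWeight w (Set.univ : Set V) = 1) {A B : Set V} (h : Disjoint A B) :
    setWeight w A + setWeight w B ≤ 1 := by
  classical
  rw [← hw1]
  unfold setWeight
  rw [← Finset.sum_union]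
  · apply Finset.sum_le_sum_of_subset_of_nonneg
    · intro x _; simp
    · intro i _ _; exact hw0 i
  · rw [Finset.disjoint_left]
    intro x hx hx'
    simp only [Set.Finite.mem_toFinset] at hx hx'
    exact Set.disjoint_left.1 h hx hx'

lemma ins_step {G : SimpleGraph V} {C : Set V} {n : ℕ} {P : ℕ → V} (h : Cyc G C n P)
    (hind : ∀ u, u ∉ C → ∀ v, v ∉ C → ¬ G.Adj u v)
    {k : ℕ} (hk : k ≤ n) {S : Set V} (hS : sepT G C n P k ⊆ S) (x z : V)
    (hx : Ins G C n P k S x) (hadj : G.Adj x z) (hz : z ∉ S) : Ins G C n P k S z := by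
  have h4 := h.n4
  have h0S : P 0 ∈ S := hS (Or.inl rfl)
  have hkS : P k ∈ S := hS (Or.inr (Or.inl rfl))
  by_cases hzC : z ∈ C
  · obtain ⟨b, hbn, rfl⟩ := h.surj z hzC
    left
    refine ⟨b, ?_, ?_, rfl, hz⟩
    · rcases Nat.eq_zero_or_pos b with rfl | h'
      · exact absurd h0S hz
      · exact h'
    · by_contra hbk
      have hne : b ≠ k := by rintro rfl; exact hz hkS
      rcases hx with ⟨a, ha0, hak, rfl, haS⟩ | ⟨hxC, hxb, _⟩
      · rw [h.adj a b (by omega) hbn] at hadj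
        omega
      · exact hxb b (by omega) hbn hadj
  · rcases hx with ⟨a, ha0, hak, rfl, haS⟩ | ⟨hxC, hxb, _⟩
    · right
      refine ⟨hzC, ?_, a, ha0, hak, hadj.symm, haS⟩
      intro b hb1 hb2 hzb
      exact haS (hS (Or.inr (Or.inr ⟨a, ha0, hak, rfl, z, hzC, hadj.symm, b, hb1, hb2, hzb⟩)))
    · exact absurd hadj (hind _ hxC _ hzC)

lemma heavy_in_C [Finite V] {G : SimpleGraph V} {C : Set V} {w : V → ℝ}
    (hw0 : ∀ v, 0 ≤ w v) (hw1 : setWeight w (Set.univ : Set V) = 1)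
    (hind : ∀ u, u ∉ C → ∀ v, v ∉ C → ¬ G.Adj u v)
    (hJw : ∀ v, v ∉ C → w v ≤ 1 / 2) {S : Set V} (hbal : ¬ IsBalancedSep G w S) :
    ∃ y ∈ C, y ∉ S ∧ 1 / 2 < setWeight w {z | ReachOutside G S z y} := by
  unfold IsBalancedSep at hbal
  push Not at hbal
  obtain ⟨v, hvS, hv⟩ := hbal
  rw [hw1] at hv
  by_cases hvC : v ∈ C
  · exact ⟨v, hvC, hvS, hv⟩
  by_cases hn : ∃ y, G.Adj v y ∧ y ∉ S
  · obtain ⟨y, hy, hyS⟩ := hn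
    refine ⟨y, ?_, hyS, lt_of_lt_of_le hv (setWeight_mono hw0 ?_)⟩
    · by_contra hyC
      exact hind _ hvC _ hyC hy
    · intro z hz
      exact ReachOutside.trans hz (ReachOutside.of_adj hvS hyS hy)
  · push Not at hn
    exfalso
    have hsub : {u | ReachOutside G S u v} ⊆ {v} := by
      intro z hz
      refine ReachOutside.inv (fun z => z = v) ?_ hz rfl
      rintro x y rfl hadj hy
      exact absurd (hn y hadj) hy
    have h1 := setWeight_mono hw0 hsub
    have h2 : setWeight w {v} = w v := by
      unfold setWeight
      simp
    have := hJw v hvC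
    linarith

lemma heavy_inter [Finite V] {w : V → ℝ}
    (hw0 : ∀ v, 0 ≤ w v) (hw1 : setWeight w (Set.univ : Set V) = 1) {A B : Set V}
    (hA : 1 / 2 < setWeight w A) (hB : 1 / 2 < setWeight w B) : ∃ x, x ∈ A ∧ x ∈ B := by
  by_contra hne
  push Not at hne
  have := setWeight_disj hw0 hw1 (Set.disjoint_left.2 hne)
  linarith

lemma heavy_arc_of_vertex [Finite V] {G : SimpleGraph V} {C : Set V} {n : ℕ} {P : ℕ → V}
    (h : Cyc G C n P) (ℓ : ℕ) (hℓ : 4 ≤ ℓ) (hfree : ¬ IsInducedMinor (wheel ℓ) G)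
    {w : V → ℝ} (hw0 : ∀ v, 0 ≤ w v) (hw1 : setWeight w (Set.univ : Set V) = 1)
    (hind : ∀ u, u ∉ C → ∀ v, v ∉ C → ¬ G.Adj u v)
    (hJw : ∀ v, v ∉ C → w v ≤ 1 / 2)
    (hNo : ∀ S, S ⊆ C → S.ncard ≤ (ℓ - 1) ^ 2 → ¬ IsBalancedSep G w S)
    (u : V) (huC : u ∉ C) (c₀ : ℕ) (hc₀ : G.Adj u (P c₀)) :
    ∃ c g, c < n ∧ 0 < g ∧ g ≤ n ∧ G.Adj u (P c) ∧ G.Adj u (P (c + g)) ∧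
      (∀ t, 0 < t → t < g → ¬ G.Adj u (P (c + t))) ∧
      Adm G C n (fun a => P (c + a)) g ∧
      Heavy G C n w (fun a => P (c + a)) g := by
  classical
  have h4 := h.n4
  have hgap : ∀ c, ∃ g, G.Adj u (P c) → (0 < g ∧ g ≤ n ∧ G.Adj u (P (c + g)) ∧
      ∀ t, 0 < t → t < g → ¬ G.Adj u (P (c + t))) := by
    intro c
    by_cases hc : G.Adj u (P c)
    · have hex : ∃ g, 0 < g ∧ G.Adj u (P (c + g)) := ⟨n, by omega, by rw [h.per]; exact hc⟩
      refine ⟨Nat.find hex, fun _ => ⟨(Nat.find_spec hex).1, ?_, (Nat.find_spec hex).2, ?_⟩⟩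
      · exact Nat.find_min' hex ⟨by omega, by rw [h.per]; exact hc⟩
      · intro t ht htg hadj
        exact Nat.find_min hex htg ⟨ht, hadj⟩
    · exact ⟨0, fun hh => absurd hh hc⟩
  choose gap hg using hgap
  have hadm : ∀ c, G.Adj u (P c) → Adm G C n (fun a => P (c + a)) (gap c) := by
    intro c hc
    obtain ⟨h1, h2, h3, h5⟩ := hg c hc
    rcases Nat.eq_or_lt_of_le h2 with e | hlt
    · exact Or.inl e
    · exact Or.inr ⟨h1, hlt, u, huC, by simpa using hc, h3, h5⟩
  set F : Finset ℕ := (Finset.range n).filter (fun c => G.Adj u (P c)) with hF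
  have hFm : ∀ t, t ∈ F ↔ t < n ∧ G.Adj u (P t) := by intro t; simp [hF]
  have hFc : F.card ≤ ℓ - 1 := deg_le h ℓ hℓ hfree u huC F (fun t ht => (hFm t).1 ht)
  set Sf : Finset V := F.biUnion (fun c =>
    (Set.toFinite (sepT G C n (fun a => P (c + a)) (gap c))).toFinset) with hSf
  have hSfc : Sf.card ≤ (ℓ - 1) ^ 2 := by
    have : Sf.card ≤ F.card * (ℓ - 1) := by
      apply Finset.card_biUnion_le_card_mul
      intro c hc
      rw [← Set.ncard_eq_toFinset_card]
      exact sepT_card (h.shift c) ℓ hℓ hfree _ (hadm c ((hFm c).1 hc).2)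
    rw [pow_two]
    exact this.trans (Nat.mul_le_mul_right _ hFc)
  have hsubS : ∀ c ∈ F, sepT G C n (fun a => P (c + a)) (gap c) ⊆ (Sf : Set V) := by
    intro c hc x hx
    simp only [hSf, Finset.coe_biUnion, Set.mem_iUnion]
    exact ⟨c, hc, by simpa using hx⟩
  have hSC : (Sf : Set V) ⊆ C := by
    intro x hx
    simp only [hSf, Finset.coe_biUnion, Set.mem_iUnion] at hx
    obtain ⟨c, hc, hx⟩ := hx
    exact sepT_subset (h.shift c) (gap c) (by simpa using hx)
  obtain ⟨y, hyC, hyS, hy⟩ := heavy_in_C hw0 hw1 hind hJw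
    (hNo Sf hSC (by rw [Set.ncard_coe_finset]; exact hSfc))
  obtain ⟨a, han, rfl⟩ := h.surj y hyC
  -- walk back to the previous neighbour of `u`
  have hex : ∃ d, d < n ∧ G.Adj u (P (a + n - d)) := by
    have e0 := h.per_mod c₀ 0
    simp only [add_zero] at e0
    have hlt := Nat.mod_lt c₀ (show n > 0 by omega)
    by_cases hle : c₀ % n ≤ a
    · refine ⟨a - c₀ % n, by omega, ?_⟩
      rw [show a + n - (a - c₀ % n) = c₀ % n + n by omega, h.per, e0]; exact hc₀
    · refine ⟨a + n - c₀ % n, by omega, ?_⟩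
      rw [show a + n - (a + n - c₀ % n) = c₀ % n by omega, e0]; exact hc₀
  obtain ⟨hd1, hd2⟩ := Nat.find_spec hex
  have hdmin := fun m (hm : m < Nat.find hex) => Nat.find_min hex hm
  set d := Nat.find hex with hd
  have hdpos : 0 < d := by
    rcases Nat.eq_zero_or_pos d with h0 | h0
    · exfalso
      rw [h0, Nat.sub_zero, h.per] at hd2
      have haF := (hFm a).2 ⟨han, hd2⟩
      exact hyS (hsubS a haF (Or.inl (by simp)))
    · exact h0
  set c := (a + n - d) % n with hc
  have hPc : ∀ t, P (c + t) = P (a + n - d + t) := fun t => h.per_mod _ t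
  have hcn : c < n := Nat.mod_lt _ (by omega)
  have hcadj : G.Adj u (P c) := by
    have := hPc 0
    simp only [add_zero] at this
    rw [this]; exact hd2
  have hcF := (hFm c).2 ⟨hcn, hcadj⟩
  obtain ⟨hg1, hg2, hg3, hg5⟩ := hg c hcadj
  have hPd : P (c + d) = P a := by
    rw [hPc, show a + n - d + d = a + n by omega, h.per]
  have hdg : d < gap c := by
    by_contra hle
    refine hdmin (d - gap c) (by omega) ⟨by omega, ?_⟩
    rw [hPc] at hg3
    rw [show a + n - (d - gap c) = a + n - d + gap c by omega]
    exact hg3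
  refine ⟨c, gap c, hcn, hg1, hg2, hcadj, hg3, hg5, hadm c hcadj, d, hdpos, hdg, ?_⟩
  refine lt_of_lt_of_le hy (setWeight_mono hw0 ?_)
  intro z hz
  change ReachOutside G _ z (P (c + d))
  rw [hPd]
  exact ReachOutside.mono (hsubS c hcF) hz

/-- main lemma — `W_ℓ`-induced-minor-free connected graph with an
induced cycle `C` whose complement is independent has a balanced separator
inside `C` of size at most `(ℓ-1)²`. -/
theorem no_big_components [Finite V] (G : SimpleGraph V) (ℓ : ℕ) (hℓ : 4 ≤ ℓ)
    (hconn : G.Connected) (hfree : ¬ IsInducedMinor (wheel ℓ) G)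
    (w : V → ℝ) (hw0 : ∀ v, 0 ≤ w v) (hw1 : setWeight w (Set.univ : Set V) = 1)
    (C : Set V) (hC : IsInducedCycle G C) (hC4 : 4 ≤ C.ncard)
    (hind : ∀ u, u ∉ C → ∀ v, v ∉ C → ¬ G.Adj u v)
    (hJw : ∀ v, v ∉ C → w v ≤ 1 / 2) :
    ∃ S ⊆ C, S.ncard ≤ (ℓ - 1) ^ 2 ∧ IsBalancedSep G w S := by
  classical
  by_contra hcon
  have hNo : ∀ S, S ⊆ C → S.ncard ≤ (ℓ - 1) ^ 2 → ¬ IsBalancedSep G w S :=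
    fun S h1 h2 h3 => hcon ⟨S, h1, h2, h3⟩
  have hsq : 3 * (ℓ - 1) ≤ (ℓ - 1) ^ 2 := by
    rw [pow_two]; exact Nat.mul_le_mul_right _ (by omega)
  obtain ⟨n, P₀, hP₀⟩ := exists_cyc G C hC hC4
  have h4 := hP₀.n4
  -- a minimal heavy arc
  have hex : ∃ k, k ≤ n ∧ ∃ P, Cyc G C n P ∧ Adm G C n P k ∧ Heavy G C n w P k := by
    refine ⟨n, le_rfl, P₀, hP₀, Or.inl rfl, ?_⟩
    have hsub : sepT G C n P₀ n ⊆ {P₀ 0} := by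
      rintro y (rfl | rfl | ⟨a, _, _, rfl, u, _, _, b, hb, hb', _⟩)
      · rfl
      · have := hP₀.per 0
        rw [zero_add] at this
        exact this
      · omega
    obtain ⟨y, hyC, hyS, hy⟩ := heavy_in_C hw0 hw1 hind hJw
      (hNo {P₀ 0} (by rintro _ rfl; exact hP₀.mem 0) (by rw [Set.ncard_singleton]; omega))
    obtain ⟨a, ha, rfl⟩ := hP₀.surj y hyC
    refine ⟨a, ?_, ha, lt_of_lt_of_le hy (setWeight_mono hw0 ?_)⟩
    · rcases Nat.eq_zero_or_pos a with rfl | h'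
      · exact absurd rfl hyS
      · exact h'
    · intro z hz
      exact ReachOutside.mono hsub hz
  obtain ⟨hkn, P, hP, hadm, hheavy⟩ := Nat.find_spec hex
  have hmin := fun m (hm : m < Nat.find hex) => Nat.find_min hex hm
  set k := Nat.find hex with hkdef
  clear_value k
  set T := sepT G C n P k with hT
  have hTc : T.ncard ≤ ℓ - 1 := sepT_card hP ℓ hℓ hfree k hadm
  have hTC : T ⊆ C := sepT_subset hP k
  obtain ⟨a₀, ha₀, ha₀k, hD⟩ := hheavy
  set D : Set V := {z | ReachOutside G T z (P a₀)} with hDdef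
  have ha₀T : P a₀ ∉ T := by
    obtain ⟨z, hz, _⟩ := heavy_inter hw0 hw1 hD hD
    exact hz.symm.left
  have hDIns : ∀ z ∈ D, Ins G C n P k T z := by
    intro z hz
    exact ReachOutside.inv _ (ins_step hP hind hkn (le_refl T)) hz
      (Or.inl ⟨a₀, ha₀, ha₀k, rfl, ha₀T⟩)
  -- the median
  set A : ℕ → Set V := fun x => {z | z ∈ D ∧ ((∃ a, 0 < a ∧ a < k ∧ a < x ∧ z = P a) ∨
    (z ∉ C ∧ (∀ t, t ≤ k → G.Adj z (P t) → t ≤ x) ∧ ∃ t, t < x ∧ t ≤ k ∧ G.Adj z (P t)))} with hA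
  have hA0 : A 0 ⊆ ∅ := by
    rintro z ⟨_, ⟨a, _, _, h, _⟩ | ⟨_, _, t, h, _⟩⟩ <;> omega
  have hAk : D ⊆ A k := by
    intro z hz
    refine ⟨hz, ?_⟩
    rcases hDIns z hz with ⟨a, h1, h2, h3, _⟩ | ⟨hzC, _, a, h1, h2, h3, _⟩
    · exact Or.inl ⟨a, h1, h2, h2, h3⟩
    · exact Or.inr ⟨hzC, fun t ht _ => ht, a, h2, h2.le, h3⟩
  have hexA : ∃ x, 1 / 2 < setWeight w (A x) :=
    ⟨k, lt_of_lt_of_le hD (setWeight_mono hw0 hAk)⟩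
  obtain ⟨x, hxk, hAx, hAx1⟩ : ∃ x, x < k ∧ setWeight w (A x) ≤ 1 / 2 ∧
      1 / 2 < setWeight w (A (x + 1)) := by
    have h1 := Nat.find_spec hexA
    have h2 : Nat.find hexA ≤ k :=
      Nat.find_min' hexA (lt_of_lt_of_le hD (setWeight_mono hw0 hAk))
    have h3 : Nat.find hexA ≠ 0 := by
      intro h0
      rw [h0] at h1
      have := setWeight_mono hw0 hA0
      have e : setWeight w (∅ : Set V) = 0 := by simp [setWeight]
      linarith
    refine ⟨Nat.find hexA - 1, by omega, ?_, ?_⟩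
    · exact not_lt.1 (Nat.find_min hexA (m := Nat.find hexA - 1) (by omega))
    · rw [show Nat.find hexA - 1 + 1 = Nat.find hexA by omega]; exact h1
  set B : Set V := {z | z ∈ D ∧ ((∃ a, x + 1 < a ∧ a < k ∧ z = P a) ∨
    (z ∉ C ∧ ∀ t, t ≤ k → G.Adj z (P t) → x + 1 ≤ t))} with hB
  have hBw : setWeight w B ≤ 1 / 2 := by
    have : Disjoint (A (x + 1)) B := by
      rw [Set.disjoint_left]
      rintro z ⟨_, ⟨a, h1, h2, h3, rfl⟩ | ⟨hzC, h1, t, h2, h3, h5⟩⟩ ⟨_, ⟨b, g1, g2, g3⟩ | ⟨hzC', g1⟩⟩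
      · have := hP.inj a b (by omega) (by omega) g3
        omega
      · exact hzC' (hP.mem a)
      · rw [g3] at hzC
        exact hzC (hP.mem b)
      · have := g1 t h3 h5
        omega
    have := setWeight_disj hw0 hw1 this
    linarith
  -- the final contradiction, for a given cut
  have fin : ∀ (S : Set V) (p q : ℕ) (y : V), T ⊆ S → p ≤ x → x + 1 ≤ q → q ≤ k →
      y ∈ C → y ∉ S → 1 / 2 < setWeight w {z | ReachOutside G S z y} →
      (∀ a, 0 < a → a < k → ReachOutside G S (P a) y → a < p ∨ q < a) →
      (∀ u a, 0 < a → a < k → u ∉ C → u ∈ D → G.Adj u (P a) → ReachOutside G S (P a) y →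
        (a < p → ∀ t, t ≤ k → G.Adj u (P t) → t ≤ p) ∧
        (q < a → ∀ t, t ≤ k → G.Adj u (P t) → q ≤ t)) → False := by
    intro S p q y hTS hpx hxq hqk hyC hyS hy hC1 hC2
    have hKD : ∀ z, ReachOutside G S z y → z ∈ D := by
      intro z hz
      obtain ⟨s, hs1, hs2⟩ := heavy_inter hw0 hw1 hy hD
      have hs1 : ReachOutside G S s y := hs1
      exact ReachOutside.trans (ReachOutside.mono hTS (hz.trans hs1.symm)) hs2
    have hyy : ReachOutside G S y y := ReachOutside.refl hyS
    -- membership of cycle vertices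
    have hCC : ∀ z, z ∈ C → ReachOutside G S z y → ∃ a, 0 < a ∧ a < k ∧ z = P a := by
      intro z hzC hz
      rcases hDIns z (hKD z hz) with ⟨a, h1, h2, h3, _⟩ | ⟨h, _⟩
      · exact ⟨a, h1, h2, h3⟩
      · exact absurd hzC h
    obtain ⟨a, ha0, hak, rfl⟩ := hCC y hyC hyy
    rcases hC1 a ha0 hak hyy with hap | haq
    · have hsub : {z | ReachOutside G S z (P a)} ⊆ A x := by
        intro z hz
        have hQ := ReachOutside.inv (fun z => ReachOutside G S z (P a) ∧
          ((∃ b, 0 < b ∧ b < p ∧ z = P b) ∨ (z ∉ C ∧ (∀ t, t ≤ k → G.Adj z (P t) → t ≤ p) ∧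
            ∃ t, t < p ∧ G.Adj z (P t)))) ?_ hz ⟨hyy, Or.inl ⟨a, ha0, hap, rfl⟩⟩
        · obtain ⟨_, ⟨b, h1, h2, h3⟩ | ⟨hzC, h1, t, h2, h3⟩⟩ := hQ
          · exact ⟨hKD z hz, Or.inl ⟨b, h1, by omega, by omega, h3⟩⟩
          · refine ⟨hKD z hz, Or.inr ⟨hzC, fun t ht hh => ?_, t, by omega, by omega, h3⟩⟩
            have := h1 t ht hh
            omega
        · rintro s z ⟨hs, hs'⟩ hadj hzS
          have hz' : ReachOutside G S z (P a) :=
            (ReachOutside.of_adj hzS hs.left hadj.symm).trans hs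
          refine ⟨hz', ?_⟩
          by_cases hzC : z ∈ C
          · obtain ⟨b, hb0, hbk, rfl⟩ := hCC z hzC hz'
            left
            refine ⟨b, hb0, ?_, rfl⟩
            rcases hC1 b hb0 hbk hz' with h | h
            · exact h
            · exfalso
              rcases hs' with ⟨c, hc0, hcp, rfl⟩ | ⟨_, h1, _⟩
              · rw [hP.adj c b (by omega) (by omega)] at hadj
                omega
              · have := h1 b hbk.le hadj
                omega
          · rcases hs' with ⟨c, hc0, hcp, rfl⟩ | ⟨hsC, _, _⟩
            · right
              exact ⟨hzC, (hC2 z c hc0 (by omega) hzC (hKD z hz') hadj.symm hs).1 hcp, c, hcp,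
                hadj.symm⟩
            · exact absurd hadj (hind _ hsC _ hzC)
      have := setWeight_mono hw0 hsub
      linarith
    · have hsub : {z | ReachOutside G S z (P a)} ⊆ B := by
        intro z hz
        have hQ := ReachOutside.inv (fun z => ReachOutside G S z (P a) ∧
          ((∃ b, q < b ∧ b < k ∧ z = P b) ∨ (z ∉ C ∧ (∀ t, t ≤ k → G.Adj z (P t) → q ≤ t))))
            ?_ hz ⟨hyy, Or.inl ⟨a, haq, hak, rfl⟩⟩
        · obtain ⟨_, ⟨b, h1, h2, h3⟩ | ⟨hzC, h1⟩⟩ := hQ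
          · exact ⟨hKD z hz, Or.inl ⟨b, by omega, by omega, h3⟩⟩
          · refine ⟨hKD z hz, Or.inr ⟨hzC, fun t ht hh => ?_⟩⟩
            have := h1 t ht hh
            omega
        · rintro s z ⟨hs, hs'⟩ hadj hzS
          have hz' : ReachOutside G S z (P a) :=
            (ReachOutside.of_adj hzS hs.left hadj.symm).trans hs
          refine ⟨hz', ?_⟩
          by_cases hzC : z ∈ C
          · obtain ⟨b, hb0, hbk, rfl⟩ := hCC z hzC hz'
            left
            refine ⟨b, ?_, hbk, rfl⟩
            rcases hC1 b hb0 hbk hz' with h | h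
            · exfalso
              rcases hs' with ⟨c, hc0, hcp, rfl⟩ | ⟨_, h1⟩
              · rw [G.adj_comm, hP.adj b c (by omega) (by omega)] at hadj
                omega
              · have := h1 b hbk.le hadj
                omega
            · exact h
          · rcases hs' with ⟨c, hc0, hcp, rfl⟩ | ⟨hsC, _⟩
            · right
              exact ⟨hzC, (hC2 z c (by omega) hcp hzC (hKD z hz') hadj.symm hs).2 hc0⟩
            · exact absurd hadj (hind _ hsC _ hzC)
      have := setWeight_mono hw0 hsub
      linarith
  -- crossing vertices
  set Cr : ℕ → Prop := fun d => ∃ u lo hi, u ∉ C ∧ u ∈ D ∧ lo ≤ x ∧ x + 1 ≤ hi ∧ hi ≤ k ∧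
    G.Adj u (P lo) ∧ G.Adj u (P hi) ∧ d = hi - lo with hCr
  by_cases hcr : ∃ d, Cr d
  · have hCrk : ∀ d, Cr d → d ≤ k := by
      rintro d ⟨u, lo, hi, _, _, _, _, h, _, _, rfl⟩
      omega
    obtain ⟨d₀, hd₀⟩ := hcr
    have hmax1 : Cr (Nat.findGreatest Cr k) := Nat.findGreatest_spec (hCrk d₀ hd₀) hd₀
    have hmax2 : ∀ d, Cr d → d ≤ Nat.findGreatest Cr k :=
      fun d hd => Nat.le_findGreatest (hCrk d hd) hd
    obtain ⟨u, lo, hi, huC, huD, hlox, hxhi, hhik, hulo, huhi, hdd⟩ := hmax1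
    have hmax : ∀ u' s t, u' ∉ C → u' ∈ D → s ≤ x → x + 1 ≤ t → t ≤ k → G.Adj u' (P s) →
        G.Adj u' (P t) → t - s ≤ hi - lo := by
      intro u' s t h1 h2 h3 h5 h6 h7 h8
      rw [← hdd]
      exact hmax2 _ ⟨u', s, t, h1, h2, h3, h5, h6, h7, h8, rfl⟩
    have hhull : ∀ t, t ≤ k → G.Adj u (P t) → lo ≤ t ∧ t ≤ hi := by
      intro t ht hadj
      constructor
      · by_contra hlt
        have := hmax u t hi huC huD (by omega) hxhi hhik hadj huhi
        omega
      · by_contra hlt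
        have := hmax u lo t huC huD hlox (by omega) ht hulo hadj
        omega
    obtain ⟨huout, a₂, ha₂0, ha₂k, hua₂⟩ : (∀ b, k < b → b < n → ¬ G.Adj u (P b)) ∧
        ∃ a, 0 < a ∧ a < k ∧ G.Adj u (P a) := by
      rcases hDIns u huD with ⟨a, _, _, e, _⟩ | ⟨_, h1, a, h2, h3, h5, _⟩
      · exact absurd (e ▸ hP.mem a) huC
      · exact ⟨h1, a, h2, h3, h5⟩
    obtain ⟨c, g, hcn, hg0, hgn, huc, hucg, hgapc, hadm', hheavy'⟩ :=
      heavy_arc_of_vertex hP ℓ hℓ hfree hw0 hw1 hind hJw hNo u huC lo hulo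
    have hgk : k ≤ g := by
      by_contra hlt
      exact hmin g (by omega) ⟨hgn, _, hP.shift c, hadm', hheavy'⟩
    have hck : c ≤ k := by
      by_contra hlt
      exact huout c (by omega) hcn huc
    have hchi : c = hi := by
      have h1 := hhull c hck huc
      by_contra hne
      have h2 : g ≤ hi - c := by
        by_contra hlt
        refine hgapc (hi - c) (by omega) (by omega) ?_
        rw [show c + (hi - c) = hi by omega]; exact huhi
      refine hgapc a₂ ha₂0 (by omega) ?_
      rw [show c + a₂ = a₂ by omega]; exact hua₂
    subst hchi
    have hg : g = lo + n - c := by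
      have h1 : g ≤ lo + n - c := by
        by_contra hlt
        refine hgapc (lo + n - c) (by omega) (by omega) ?_
        rw [show c + (lo + n - c) = lo + n by omega, hP.per]; exact hulo
      have h2 : n ≤ c + g := by
        by_contra hlt
        by_cases hle : c + g ≤ k
        · have := hhull _ hle hucg
          omega
        · exact huout (c + g) (by omega) (by omega) hucg
      have h3 : G.Adj u (P (c + g - n)) := by
        rw [← hP.per, show c + g - n + n = c + g by omega]; exact hucg
      have := hhull _ (by omega) h3
      omega
    set P' : ℕ → V := fun a => P (c + a) with hP'
    have hPc' : Cyc G C n P' := hP.shift c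
    set T' := sepT G C n P' g with hT'
    have hTc' : T'.ncard ≤ ℓ - 1 := sepT_card hPc' ℓ hℓ hfree g hadm'
    have hTC' : T' ⊆ C := sepT_subset hPc' g
    obtain ⟨a₁, ha₁, ha₁g, hD'⟩ := hheavy'
    have ha₁T : P' a₁ ∉ T' := by
      obtain ⟨z, hz, _⟩ := heavy_inter hw0 hw1 hD' hD'
      exact (ReachOutside.symm hz).left
    have hScard : (T ∪ T').ncard ≤ (ℓ - 1) ^ 2 := by
      have := Set.ncard_union_le T T'
      omega
    obtain ⟨y, hyC, hyS, hy⟩ := heavy_in_C hw0 hw1 hind hJw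
      (hNo (T ∪ T') (Set.union_subset hTC hTC') hScard)
    have hKI : ∀ z, ReachOutside G (T ∪ T') z y → Ins G C n P' g T' z := by
      intro z hz
      obtain ⟨s, hs1, hs2⟩ := heavy_inter hw0 hw1 hy hD'
      have hs1 : ReachOutside G (T ∪ T') s y := hs1
      have h1 : ReachOutside G T' z (P' a₁) :=
        ReachOutside.trans (ReachOutside.mono Set.subset_union_right (hz.trans hs1.symm)) hs2
      exact ReachOutside.inv _ (ins_step hPc' hind hgn (le_refl T')) h1
        (Or.inl ⟨a₁, ha₁, ha₁g, rfl, ha₁T⟩)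
    refine fin (T ∪ T') lo c y Set.subset_union_left hlox hxhi hhik hyC hyS hy ?_ ?_
    · intro a ha0 hak ha
      rcases hKI _ ha with ⟨b, hb0, hbg, e, _⟩ | ⟨h, _⟩
      · simp only [hP'] at e
        by_cases hlt : c + b < n
        · have := hP.inj _ _ (by omega) hlt e
          omega
        · rw [show c + b = c + b - n + n by omega, hP.per] at e
          have := hP.inj _ _ (by omega) (by omega) e
          omega
      · exact absurd (hP.mem a) h
    · intro u' a ha0 hak hu'C hu'D hadj ha
      have haT' : P a ∉ T' := fun hh => ha.left (Or.inr hh)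
      -- neighbours strictly inside the hull put `P a` into `T'`
      have hinner : (a < lo ∨ c < a) → ∀ t, lo < t → t < c → ¬ G.Adj u' (P t) := by
        intro hac t h1 h2 ht
        apply haT'
        have ht' : G.Adj u' (P' (t + n - c)) := by
          simp only [hP']
          rw [show c + (t + n - c) = t + n by omega, hP.per]; exact ht
        rcases hac with hac | hac
        · refine Or.inr (Or.inr ⟨a + n - c, by omega, by omega, ?_, u', hu'C, hadj, t + n - c,
            by omega, by omega, ht'⟩)
          simp only [hP']
          rw [show c + (a + n - c) = a + n by omega, hP.per]
        · refine Or.inr (Or.inr ⟨a - c, by omega, by omega, ?_, u', hu'C, hadj, t + n - c,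
            by omega, by omega, ht'⟩)
          simp only [hP']
          rw [show c + (a - c) = a by omega]
      constructor
      · intro hal t htk ht
        by_contra hlt
        by_cases htc : t < c
        · exact hinner (Or.inl hal) t (by omega) htc ht
        · have := hmax u' a t hu'C hu'D (by omega) (by omega) htk hadj ht
          omega
      · intro hca t htk ht
        by_contra hlt
        by_cases htl : lo < t
        · exact hinner (Or.inr hca) t htl (by omega) ht
        · have := hmax u' t a hu'C hu'D (by omega) (by omega) hak.le ht hadj
          omega
  · have hScard : (T ∪ {P x, P (x + 1)}).ncard ≤ (ℓ - 1) ^ 2 := by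
      have h1 := Set.ncard_union_le T {P x, P (x + 1)}
      have h2 := Set.ncard_insert_le (P x) {P (x + 1)}
      rw [Set.ncard_singleton] at h2
      omega
    have hSC : T ∪ {P x, P (x + 1)} ⊆ C := by
      apply Set.union_subset hTC
      rintro z (rfl | rfl) <;> exact hP.mem _
    obtain ⟨y, hyC, hyS, hy⟩ := heavy_in_C hw0 hw1 hind hJw (hNo _ hSC hScard)
    refine fin _ x (x + 1) y Set.subset_union_left le_rfl le_rfl hxk hyC hyS hy ?_ ?_
    · intro a ha0 hak ha
      have h1 : a ≠ x := by
        rintro rfl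
        exact ha.left (Or.inr (Or.inl rfl))
      have h2 : a ≠ x + 1 := by
        rintro rfl
        exact ha.left (Or.inr (Or.inr rfl))
      omega
    · intro u a ha0 hak huC huD hadj ha
      constructor
      · intro hax t htk ht
        by_contra hlt
        exact hcr ⟨_, u, a, t, huC, huD, hax.le, by omega, htk, hadj, ht, rfl⟩
      · intro hax t htk ht
        by_contra hlt
        exact hcr ⟨_, u, t, a, huC, huD, by omega, by omega, hak.le, ht, hadj, rfl⟩
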